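/- Consider a uniform real-valued line model: let l > 0, let i₀, ι, ζ be real numbers with i₀ ≠ 0 and ι·l ≠ 2·i₀, let v(0) ≠ 0 be the real input voltage, and set i(l) = i₀ − ι·l, v(l) = v(0) − ζ·(i₀·l − (ι/2)·l²), assumed nonzero. Define the powers p(0) = v(0)·i₀ and p(l) = v(l)·i(l), the ratios ρ_v = v(l)/v(0) and ρ_s = p(l)/p(0), the total loss λ_ms = ζ·(i₀²·l − i₀·ι·l² + (ι²/3)·l³), and ĉ = 1 − ((ρ_v − ρ_s)/(ρ_v + ρ_s))·((ρ_v + 2ρ_s)/(3ρ_v)). Then the loss fraction satisfies exactly λ_ms / p(0) = ĉ·(v(0)² − v(0)·v(l)) / v(0)². -/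

import Mathlib

/-!
An affine current with end values `a` and `b` has mean `(a + b) / 2` and mean square
`(a ^ 2 + a * b + b ^ 2) / 3` along the line. The voltage drop is `ζ * l` times the mean and the
loss is `ζ * l` times the mean square, so loss and drop differ by a factor that depends on the end
currents alone. Since `ρ_s / ρ_v` is the ratio of those currents, the factor can be read off from
the end measurements, and `ĉ` is its value relative to the input current.
-/

section UniformLine

variable {K : Type*} [Field K]

/-- The mean value over an interval of an affine function with end values `a` and `b`, in the
closed form that makes sense over any field. -/
def affineMean (a b : K) : K := (a + b) / 2

/-- The mean value over an interval of the square of an affine function with end values `a` and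
`b`, in the closed form that makes sense over any field. -/
def affineMeanSq (a b : K) : K := (a ^ 2 + a * b + b ^ 2) / 3

/-- The correction factor `ĉ` of the multi-segment voss estimator, as a function of the voltage
ratio `ρv` and the power ratio `ρs` between the end and the start of the line. -/
def vossCorrection (ρv ρs : K) : K :=
  1 - ((ρv - ρs) / (ρv + ρs)) * ((ρv + 2 * ρs) / (3 * ρv))

-- Over `ℝ` the right-hand side is `∫ x in 0..l, (a - c * x)`.
theorem mul_affineMean [NeZero (2 : K)] (a c l : K) :
    l * affineMean a (a - c * l) = a * l - c / 2 * l ^ 2 := by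
  unfold affineMean
  field_simp
  ring

-- Over `ℝ` the right-hand side is `∫ x in 0..l, (a - c * x) ^ 2`.
theorem mul_affineMeanSq [NeZero (3 : K)] (a c l : K) :
    l * affineMeanSq a (a - c * l) = a ^ 2 * l - a * c * l ^ 2 + c ^ 2 / 3 * l ^ 3 := by
  unfold affineMeanSq
  field_simp
  ring

theorem vossCorrection_mul_right [NeZero (3 : K)] {ρ r : K} (hρ : ρ ≠ 0) (hr : 1 + r ≠ 0) :
    vossCorrection ρ (ρ * r) = 2 * (1 + r + r ^ 2) / (3 * (1 + r)) := by
  have current_ratio : (ρ - ρ * r) / (ρ + ρ * r) = (1 - r) / (1 + r) := by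
    rw [← mul_one_sub, ← mul_one_add, mul_div_mul_left _ _ hρ]
  have weight : (ρ + 2 * (ρ * r)) / (3 * ρ) = (1 + 2 * r) / 3 := by
    field_simp
  rw [vossCorrection, current_ratio, weight]
  field_simp
  ring

theorem vossCorrection_mul_affineMean [NeZero (2 : K)] [NeZero (3 : K)] {ρ a b : K}
    (hρ : ρ ≠ 0) (ha : a ≠ 0) (hab : a + b ≠ 0) :
    vossCorrection ρ (ρ * (b / a)) * (a * affineMean a b) = affineMeanSq a b := by
  have one_add_ratio : 1 + b / a = (a + b) / a := one_add_div ha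
  have one_add_ratio_ne_zero : 1 + b / a ≠ 0 := one_add_ratio ▸ div_ne_zero hab ha
  rw [vossCorrection_mul_right hρ one_add_ratio_ne_zero, one_add_ratio, affineMean, affineMeanSq]
  field_simp

theorem stmt_12_general [NeZero (2 : K)] [NeZero (3 : K)] {l i₀ ι ζ v0 : K} (hi₀ : i₀ ≠ 0)
    (hι : ι * l ≠ 2 * i₀) (hv0 : v0 ≠ 0)
    {il vl p0 pl ρv ρs lms cHat : K}
    (hil : il = i₀ - ι * l)
    (hvl : vl = v0 - ζ * (i₀ * l - (ι / 2) * l ^ 2)) (hvl0 : vl ≠ 0)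
    (hp0 : p0 = v0 * i₀) (hpl : pl = vl * il)
    (hρv : ρv = vl / v0) (hρs : ρs = pl / p0)
    (hlms : lms = ζ * (i₀ ^ 2 * l - i₀ * ι * l ^ 2 + (ι ^ 2 / 3) * l ^ 3))
    (hcHat : cHat = vossCorrection ρv ρs) :
    lms / p0 = cHat * ((v0 ^ 2 - v0 * vl) / v0 ^ 2) := by
  have current_sum_ne_zero : i₀ + il ≠ 0 := fun h => hι (by linear_combination hil - h)
  have power_ratio : ρs = ρv * (il / i₀) := by rw [hρs, hρv, hpl, hp0, mul_div_mul_comm]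
  have drop : v0 - vl = ζ * (l * affineMean i₀ il) := by
    rw [hvl, hil, mul_affineMean, sub_sub_cancel]
  have loss : lms = ζ * (l * affineMeanSq i₀ il) := by
    rw [hlms, hil, mul_affineMeanSq]
  have correction : cHat * (i₀ * affineMean i₀ il) = affineMeanSq i₀ il := by
    rw [hcHat, power_ratio]
    exact vossCorrection_mul_affineMean (hρv ▸ div_ne_zero hvl0 hv0) hi₀ current_sum_ne_zero
  have loss_eq : lms = cHat * i₀ * (v0 - vl) := by
    rw [loss, drop, ← correction]
    ring
  rw [loss_eq, hp0]
  field_simp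

end UniformLine

/-- In the real-valued uniform line model, the exact loss fraction `λ_ms / p(0)`
equals the corrected multi-segment voss estimator `cHat·(v(0)² - v(0)·v(l))/v(0)²`. -/
theorem stmt_12 (l i₀ ι ζ v0 : ℝ) (hl : 0 < l) (hi₀ : i₀ ≠ 0)
    (hι : ι * l ≠ 2 * i₀) (hv0 : v0 ≠ 0)
    (il vl p0 pl ρv ρs lms cHat : ℝ)
    (hil : il = i₀ - ι * l)
    (hvl : vl = v0 - ζ * (i₀ * l - (ι / 2) * l ^ 2)) (hvl0 : vl ≠ 0)
    (hp0 : p0 = v0 * i₀) (hpl : pl = vl * il)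
    (hρv : ρv = vl / v0) (hρs : ρs = pl / p0)
    (hlms : lms = ζ * (i₀ ^ 2 * l - i₀ * ι * l ^ 2 + (ι ^ 2 / 3) * l ^ 3))
    (hcHat : cHat = 1 - ((ρv - ρs) / (ρv + ρs)) * ((ρv + 2 * ρs) / (3 * ρv))) :
    lms / p0 = cHat * ((v0 ^ 2 - v0 * vl) / v0 ^ 2) :=
  stmt_12_general hi₀ hι hv0 hil hvl hvl0 hp0 hpl hρv hρs hlms hcHat
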